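/- (M. W. Wong's inequality.) Let 1 ≤ q < ∞ and let 0 < s < t be real numbers. Then for every ε > 0 there exists a constant C > 0 such that ‖J_{−s} φ‖_q ≤ ε ‖J_{−t} φ‖_q + C ‖φ‖_q for all φ ∈ 𝒮(ℝⁿ). -/

import Mathlib

open MeasureTheory Complex
open scoped FourierTransform ENNReal SchwartzMap

/-- The Bessel potential `J_z f = 𝓕⁻¹((1+|ξ|²)^(-z/2) · 𝓕 f)` of a function on `ℝⁿ`. -/
noncomputable def besselPotential (n : ℕ) (z : ℂ)
    (f : EuclideanSpace ℝ (Fin n) → ℂ) : EuclideanSpace ℝ (Fin n) → ℂ :=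
  𝓕⁻ (fun ξ => ((1 : ℂ) + (‖ξ‖ : ℂ) ^ 2) ^ (-z / 2) * 𝓕 f ξ)

section Multipliers

variable {V : Type*} [NormedAddCommGroup V] [InnerProductSpace ℝ V] [FiniteDimensional ℝ V]
  [MeasurableSpace V] [BorelSpace V] {Ω : Type*} [MeasurableSpace Ω]

/-- **Young's inequality** for a superposition of translates: the `L^q` norm of
`x ↦ ∫ c(ω) f(x - p(ω)) dμ(ω)` is at most `‖c‖₁ ‖f‖_q`. -/
theorem eLpNorm_integral_mul_translate_le {μ : Measure Ω} [SFinite μ] {c : Ω → ℂ}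
    (hc : Integrable c μ) {p : Ω → V} (hp : Measurable p) {f : V → ℂ} (hf : Continuous f)
    {q : ℝ≥0∞} (hq : 1 ≤ q) (hq' : q ≠ ∞) :
    eLpNorm (fun x => ∫ ω, c ω * f (x - p ω) ∂μ) q volume ≤
      (∫⁻ ω, ‖c ω‖ₑ ∂μ) * eLpNorm f q volume := by
  have hq0 : q ≠ 0 := (zero_lt_one.trans_le hq).ne'
  have hr : 1 ≤ q.toReal := by simpa using ENNReal.toReal_mono hq' hq
  have hr0 : 0 < q.toReal := zero_lt_one.trans_le hr
  set M : ℝ≥0∞ := ∫⁻ ω, ‖c ω‖ₑ ∂μ with hM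
  have hc' : AEMeasurable (fun ω => ‖c ω‖ₑ) μ := hc.1.enorm
  set ν : Measure Ω := μ.withDensity fun ω => ‖c ω‖ₑ with hν
  have hνM : ν Set.univ = M := by simp [hν, hM]
  have hmeas : Measurable (fun z : V × Ω => f (z.1 - p z.2)) := by fun_prop
  have key (x : V) : ‖∫ ω, c ω * f (x - p ω) ∂μ‖ₑ ^ q.toReal ≤
      (∫⁻ ω, ‖f (x - p ω)‖ₑ ^ q.toReal ∂ν) * M ^ (q.toReal - 1) := by
    have hx : Measurable (fun ω => f (x - p ω)) := by fun_prop
    have h1 : ‖∫ ω, c ω * f (x - p ω) ∂μ‖ₑ ≤ eLpNorm (fun ω => f (x - p ω)) 1 ν := by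
      refine (enorm_integral_le_lintegral_enorm _).trans_eq ?_
      rw [eLpNorm_one_eq_lintegral_enorm,
        lintegral_withDensity_eq_lintegral_mul₀ hc' hx.enorm.aemeasurable]
      simp
    have h2 := eLpNorm_le_eLpNorm_mul_rpow_measure_univ hq (μ := ν) hx.aestronglyMeasurable
    calc _ ≤ (eLpNorm (fun ω => f (x - p ω)) q ν *
          ν Set.univ ^ (1 / (1 : ℝ≥0∞).toReal - 1 / q.toReal)) ^ q.toReal := by
          gcongr; exact h1.trans h2
      _ = _ := by
          rw [ENNReal.mul_rpow_of_nonneg _ _ hr0.le, hνM,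
            eLpNorm_eq_lintegral_rpow_enorm_toReal hq0 hq', ← ENNReal.rpow_mul,
            ← ENNReal.rpow_mul]
          congr 2
          · rw [one_div_mul_cancel hr0.ne', ENNReal.rpow_one]
          · field_simp; simp
  have hM1 : M * M ^ (q.toReal - 1) = M ^ q.toReal := by
    conv_lhs => enter [1]; rw [← ENNReal.rpow_one M]
    rw [← ENNReal.rpow_add_of_nonneg _ _ zero_le_one (by linarith), add_sub_cancel]
  rw [eLpNorm_eq_lintegral_rpow_enorm_toReal hq0 hq',
    eLpNorm_eq_lintegral_rpow_enorm_toReal hq0 hq']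
  calc _ ≤ (M ^ q.toReal * ∫⁻ x, ‖f x‖ₑ ^ q.toReal) ^ (1 / q.toReal) := by
        gcongr
        calc _ ≤ ∫⁻ x, (∫⁻ ω, ‖f (x - p ω)‖ₑ ^ q.toReal ∂ν) * M ^ (q.toReal - 1) :=
              lintegral_mono key
          _ = (∫⁻ x, ∫⁻ ω, ‖f (x - p ω)‖ₑ ^ q.toReal ∂ν) * M ^ (q.toReal - 1) :=
              lintegral_mul_const _ (hmeas.enorm.pow_const _).lintegral_prod_right'
          _ = (∫⁻ ω, (∫⁻ x, ‖f (x - p ω)‖ₑ ^ q.toReal) ∂ν) * M ^ (q.toReal - 1) := by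
              rw [lintegral_lintegral_swap]
              exact (hmeas.enorm.pow_const _).aemeasurable
          _ = _ := by
              simp_rw [lintegral_sub_right_eq_self (μ := volume) fun x => ‖f x‖ₑ ^ q.toReal]
              rw [lintegral_const, hνM, ← hM1]
              ring
    _ = _ := by
        rw [ENNReal.mul_rpow_of_nonneg _ _ (by positivity), ← ENNReal.rpow_mul,
          mul_one_div_cancel hr0.ne', ENNReal.rpow_one]

/-- The integrand relating a Fourier–Stieltjes multiplier to translations is integrable. -/
theorem integrable_mul_cexp_mul_fourier {μ : Measure Ω} [SFinite μ] {c : Ω → ℂ}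
    (hc : Integrable c μ) {p : Ω → V} (hp : Measurable p) (ψ : 𝓢(V, ℂ)) :
    Integrable (fun z : V × Ω =>
      c z.2 * Complex.exp (↑(-2 * Real.pi * inner ℝ (p z.2) z.1) * I) * 𝓕 (ψ : V → ℂ) z.1)
      (volume.prod μ) := by
  have hψ : Integrable (𝓕 (ψ : V → ℂ)) := (𝓕 ψ : 𝓢(V, ℂ)).integrable
  have h := (hψ.mul_prod hc).bdd_mul (c := 1) (f := fun z : V × Ω =>
    Complex.exp (↑(-2 * Real.pi * inner ℝ (p z.2) z.1) * I))
    (by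
      refine Measurable.aestronglyMeasurable ?_
      have : Measurable fun z : V × Ω => inner ℝ (p z.2) z.1 := by fun_prop
      fun_prop)
    (.of_forall fun z => by rw [Complex.norm_exp_ofReal_mul_I])
  refine h.congr (.of_forall fun z => ?_)
  simp only
  ring

/-- A Fourier–Stieltjes multiplier acts on Schwartz functions as a superposition of translations. -/
theorem fourierInv_integral_mul_fourier_eq {μ : Measure Ω} [SFinite μ] {c : Ω → ℂ}
    (hc : Integrable c μ) {p : Ω → V} (hp : Measurable p) (ψ : 𝓢(V, ℂ)) :
    𝓕⁻ (fun ξ : V => (∫ ω, c ω * Complex.exp (↑(-2 * Real.pi * inner ℝ (p ω) ξ) * I) ∂μ) *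
      𝓕 (ψ : V → ℂ) ξ) = fun x => ∫ ω, c ω * ψ (x - p ω) ∂μ := by
  ext x
  have hint := (integrable_mul_cexp_mul_fourier hc hp ψ).bdd_mul (c := 1) (f := fun z : V × Ω =>
    Complex.exp (↑(2 * Real.pi * inner ℝ z.1 x) * I))
    (by
      refine Measurable.aestronglyMeasurable ?_
      fun_prop)
    (.of_forall fun z => by rw [Complex.norm_exp_ofReal_mul_I])
  have hψ : 𝓕⁻ (𝓕 (ψ : V → ℂ)) = ψ :=
    ψ.continuous.fourierInv_fourier_eq ψ.integrable (𝓕 ψ : 𝓢(V, ℂ)).integrable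
  rw [Real.fourierInv_eq']
  calc _ = ∫ ξ, ∫ ω, Complex.exp (↑(2 * Real.pi * inner ℝ ξ x) * I) *
        (c ω * Complex.exp (↑(-2 * Real.pi * inner ℝ (p ω) ξ) * I) * 𝓕 (ψ : V → ℂ) ξ) ∂μ := by
        congr 1 with ξ
        rw [smul_eq_mul, ← integral_mul_const, ← integral_const_mul]
    _ = ∫ ω, (∫ ξ, Complex.exp (↑(2 * Real.pi * inner ℝ ξ x) * I) *
        (c ω * Complex.exp (↑(-2 * Real.pi * inner ℝ (p ω) ξ) * I) * 𝓕 (ψ : V → ℂ) ξ)) ∂μ :=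
        integral_integral_swap hint
    _ = _ := by
        congr 1 with ω
        nth_rewrite 2 [← hψ]
        rw [Real.fourierInv_eq', ← integral_const_mul]
        congr 1 with ξ
        rw [inner_sub_right, real_inner_comm ξ (p ω), smul_eq_mul]
        have : Complex.exp (↑(2 * Real.pi * (inner ℝ ξ x - inner ℝ ξ (p ω))) * I) =
            Complex.exp (↑(2 * Real.pi * inner ℝ ξ x) * I) *
            Complex.exp (↑(-2 * Real.pi * inner ℝ ξ (p ω)) * I) := by
          rw [← Complex.exp_add]; congr 1; push_cast; ring
        rw [this]
        ring

theorem eLpNorm_fourierInv_integral_mul_fourier_le {μ : Measure Ω} [SFinite μ] {c : Ω → ℂ}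
    (hc : Integrable c μ) {p : Ω → V} (hp : Measurable p) (ψ : 𝓢(V, ℂ))
    {q : ℝ≥0∞} (hq : 1 ≤ q) (hq' : q ≠ ∞) :
    eLpNorm (𝓕⁻ (fun ξ : V =>
      (∫ ω, c ω * Complex.exp (↑(-2 * Real.pi * inner ℝ (p ω) ξ) * I) ∂μ) * 𝓕 (ψ : V → ℂ) ξ))
      q volume ≤ (∫⁻ ω, ‖c ω‖ₑ ∂μ) * eLpNorm ψ q volume := by
  rw [fourierInv_integral_mul_fourier_eq hc hp]
  exact eLpNorm_integral_mul_translate_le hc hp ψ.continuous hq hq'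

theorem integrable_integral_mul_fourier {μ : Measure Ω} [SFinite μ] {c : Ω → ℂ}
    (hc : Integrable c μ) {p : Ω → V} (hp : Measurable p) (ψ : 𝓢(V, ℂ)) :
    Integrable (fun ξ : V =>
      (∫ ω, c ω * Complex.exp (↑(-2 * Real.pi * inner ℝ (p ω) ξ) * I) ∂μ) *
        𝓕 (ψ : V → ℂ) ξ) := by
  simpa only [integral_mul_const] using (integrable_mul_cexp_mul_fourier hc hp ψ).integral_prod_left

/-- The multiplier whose symbol is the Fourier transform of a Schwartz function `K` is bounded on
`L^q`, with norm at most `‖K‖₁`. -/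
theorem eLpNorm_fourierInv_mul_fourier_le (K ψ : 𝓢(V, ℂ))
    {q : ℝ≥0∞} (hq : 1 ≤ q) (hq' : q ≠ ∞) :
    eLpNorm (𝓕⁻ (fun ξ : V => 𝓕 (K : V → ℂ) ξ * 𝓕 (ψ : V → ℂ) ξ)) q volume ≤
      (∫⁻ x, ‖K x‖ₑ) * eLpNorm ψ q volume := by
  have h := eLpNorm_fourierInv_integral_mul_fourier_le (K.integrable (μ := volume)) measurable_id ψ
    hq hq'
  convert h using 5 with ξ
  rw [Real.fourier_eq']
  simp [mul_comm]

/-- The Fourier transform of the Gaussian measure with variance proportional to `r`. -/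
theorem integral_cexp_inner_smul_stdGaussian {r : ℝ} (hr : 0 ≤ r) (ξ : V) :
    ∫ z, Complex.exp (↑(-2 * Real.pi * inner ℝ ((√(2 * r) / (2 * Real.pi)) • z) ξ) * I)
      ∂(ProbabilityTheory.stdGaussian V) = (Real.exp (-r * ‖ξ‖ ^ 2) : ℂ) := by
  have h := ProbabilityTheory.charFun_stdGaussian ((-√(2 * r)) • ξ)
  rw [charFun_apply] at h
  convert h using 1
  · congr 1 with z
    rw [inner_smul_left, inner_smul_right]
    congr 3
    have := Real.pi_ne_zero
    simp
    field_simp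
  · rw [← Complex.ofReal_pow, norm_smul, mul_pow, norm_neg, Real.norm_eq_abs, sq_abs,
      Real.sq_sqrt (by positivity)]
    push_cast
    congr 1
    ring

theorem integrable_mul_exp_neg_prod_stdGaussian {w τ : ℝ → ℝ} {S : Set ℝ}
    (hw : IntegrableOn (fun r => w r * Real.exp (-τ r)) S) :
    Integrable (fun ω : ℝ × V => ((w ω.1 * Real.exp (-τ ω.1) : ℝ) : ℂ))
      ((volume.restrict S).prod (ProbabilityTheory.stdGaussian V)) := by
  simpa using Integrable.mul_prod hw.ofReal
    (integrable_const (1 : ℂ) (μ := ProbabilityTheory.stdGaussian V))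

/-- A superposition of the heat semigroup symbols `exp (-τ (1 + |ξ|²))` as a Fourier–Stieltjes
transform. -/
theorem integral_prod_stdGaussian_eq {w τ : ℝ → ℝ} {S : Set ℝ} (hS : MeasurableSet S)
    (hτ : Measurable τ) (hτ0 : ∀ r ∈ S, 0 ≤ τ r)
    (hw : IntegrableOn (fun r => w r * Real.exp (-τ r)) S) (ξ : V) :
    ∫ ω : ℝ × V, ((w ω.1 * Real.exp (-τ ω.1) : ℝ) : ℂ) *
      Complex.exp (↑(-2 * Real.pi * inner ℝ ((√(2 * τ ω.1) / (2 * Real.pi)) • ω.2) ξ) * I)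
      ∂((volume.restrict S).prod (ProbabilityTheory.stdGaussian V)) =
    ((∫ r in S, w r * Real.exp (-τ r * (1 + ‖ξ‖ ^ 2)) : ℝ) : ℂ) := by
  have hint := (integrable_mul_exp_neg_prod_stdGaussian (V := V) hw).mul_bdd (c := 1)
    (g := fun ω : ℝ × V => Complex.exp
      (↑(-2 * Real.pi * inner ℝ ((√(2 * τ ω.1) / (2 * Real.pi)) • ω.2) ξ) * I))
    (Measurable.aestronglyMeasurable (by fun_prop))
    (.of_forall fun z => by rw [Complex.norm_exp_ofReal_mul_I])
  rw [integral_prod _ hint, ← integral_complex_ofReal]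
  refine setIntegral_congr_fun hS fun r hr => ?_
  simp only
  rw [integral_const_mul, integral_cexp_inner_smul_stdGaussian (hτ0 r hr), ← Complex.ofReal_mul,
    mul_assoc, ← Real.exp_add]
  congr 3
  ring_nf

/-- Superpositions of the heat semigroup generated by `|ξ|² + 1` are bounded on `L^q`. -/
theorem eLpNorm_fourierInv_heat_le {w τ : ℝ → ℝ} {S : Set ℝ} (hS : MeasurableSet S)
    (hτ : Measurable τ) (hτ0 : ∀ r ∈ S, 0 ≤ τ r)
    (hw : IntegrableOn (fun r => w r * Real.exp (-τ r)) S) (ψ : 𝓢(V, ℂ))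
    {q : ℝ≥0∞} (hq : 1 ≤ q) (hq' : q ≠ ∞) :
    eLpNorm (𝓕⁻ (fun ξ : V =>
      ((∫ r in S, w r * Real.exp (-τ r * (1 + ‖ξ‖ ^ 2)) : ℝ) : ℂ) * 𝓕 (ψ : V → ℂ) ξ)) q volume ≤
      (∫⁻ r in S, ‖w r * Real.exp (-τ r)‖ₑ) * eLpNorm ψ q volume := by
  have hc := integrable_mul_exp_neg_prod_stdGaussian (V := V) hw
  have h := eLpNorm_fourierInv_integral_mul_fourier_le hc
    (p := fun ω => (√(2 * τ ω.1) / (2 * Real.pi)) • ω.2) (by fun_prop) ψ hq hq'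
  simp_rw [integral_prod_stdGaussian_eq hS hτ hτ0 hw] at h
  rw [lintegral_prod _ hc.1.enorm] at h
  have hnorm (x : ℝ) : ‖(x : ℂ)‖ₑ = ‖x‖ₑ := by
    rw [← ofReal_norm, Complex.norm_real, ofReal_norm]
  simpa only [hnorm, lintegral_const, measure_univ, mul_one] using h

theorem integrable_heat_mul_fourier {w τ : ℝ → ℝ} {S : Set ℝ} (hS : MeasurableSet S)
    (hτ : Measurable τ) (hτ0 : ∀ r ∈ S, 0 ≤ τ r)
    (hw : IntegrableOn (fun r => w r * Real.exp (-τ r)) S) (ψ : 𝓢(V, ℂ)) :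
    Integrable (fun ξ : V =>
      ((∫ r in S, w r * Real.exp (-τ r * (1 + ‖ξ‖ ^ 2)) : ℝ) : ℂ) * 𝓕 (ψ : V → ℂ) ξ) := by
  have h := integrable_integral_mul_fourier (integrable_mul_exp_neg_prod_stdGaussian (V := V) hw)
    (p := fun ω => (√(2 * τ ω.1) / (2 * Real.pi)) • ω.2) (by fun_prop) ψ
  simpa only [integral_prod_stdGaussian_eq hS hτ hτ0 hw] using h

theorem integrable_fourierChar_inner_smul {f : V → ℂ} (hf : Integrable f) (x : V) :
    Integrable (fun v => Real.fourierChar (inner ℝ v x) • f v) := by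
  simpa using (Real.fourierIntegral_convergent_iff (-x)).2 hf

theorem continuous_fourierInv {f : V → ℂ} (hf : Integrable f) : Continuous (𝓕⁻ f) := by
  have h : Continuous (𝓕 f) := VectorFourier.fourierIntegral_continuous Real.continuous_fourierChar
    continuous_inner hf
  convert h.comp continuous_neg using 1
  ext x
  exact Real.fourierInv_eq_fourier_neg f x

end Multipliers

section Gaussian

variable {V : Type*} [NormedAddCommGroup V] [InnerProductSpace ℝ V]

theorem one_add_pow_mul_exp_neg_le {δ : ℝ} (hδ : 0 < δ) (N : ℕ) {u : ℝ} (hu : 0 ≤ u) :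
    (1 + u) ^ N * Real.exp (-(δ * (1 + u ^ 2))) ≤ (2 / δ) ^ N * N.factorial := by
  have h1 : (1 + u) ^ N ≤ (2 / δ) ^ N * (δ * (1 + u ^ 2)) ^ N := by
    rw [← mul_pow]
    gcongr
    field_simp
    nlinarith [sq_nonneg (u - 1)]
  have h2 : (δ * (1 + u ^ 2)) ^ N ≤ N.factorial * Real.exp (δ * (1 + u ^ 2)) := by
    have := Real.pow_div_factorial_le_exp (δ * (1 + u ^ 2)) (by positivity) N
    rwa [div_le_iff₀' (by positivity)] at this
  rw [Real.exp_neg, ← div_eq_mul_inv, div_le_iff₀ (Real.exp_pos _), mul_assoc]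
  exact h1.trans (by gcongr)

/-- The Gaussian `x ↦ exp (-δ (1 + ‖x‖²))` is a Schwartz function. -/
theorem exists_schwartzMap_eq_exp_neg {δ : ℝ} (hδ : 0 < δ) :
    ∃ G : 𝓢(V, ℝ), ∀ x, G x = Real.exp (-(δ * (1 + ‖x‖ ^ 2))) := by
  set f : V → ℝ := fun x => -(δ * (1 + ‖x‖ ^ 2))
  have hf : f.HasTemperateGrowth := by fun_prop
  refine ⟨⟨Real.exp ∘ f, Real.contDiff_exp.comp hf.1, fun k n => ?_⟩, fun x => rfl⟩
  obtain ⟨l, C, hC, hl⟩ := hf.norm_iteratedFDeriv_le_uniform n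
  refine ⟨n.factorial * (1 + C) ^ n * ((2 / δ) ^ (k + l * n) * (k + l * n).factorial),
    fun x => ?_⟩
  have hexp : ∀ i, i ≤ n → ‖iteratedFDeriv ℝ i Real.exp (f x)‖ ≤ Real.exp (f x) := by
    intro i _
    rw [norm_iteratedFDeriv_eq_norm_iteratedDeriv, iteratedDeriv_eq_iterate, Real.iter_deriv_exp,
      Real.norm_eq_abs, Real.abs_exp]
  have hf' : ∀ i, 1 ≤ i → i ≤ n →
      ‖iteratedFDeriv ℝ i f x‖ ≤ ((1 + C) * (1 + ‖x‖) ^ l) ^ i := by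
    intro i hi hi'
    calc _ ≤ C * (1 + ‖x‖) ^ l := hl i hi' x
      _ ≤ (1 + C) * (1 + ‖x‖) ^ l := by gcongr; simp
      _ ≤ _ := by
        apply le_self_pow₀ (one_le_mul_of_one_le_of_one_le (by simp [hC]) (by simp [one_le_pow₀]))
        lia
  have hbound := norm_iteratedFDeriv_comp_le Real.contDiff_exp hf.1 (mod_cast le_top) x
    hexp hf'
  calc _ ≤ (1 + ‖x‖) ^ k *
        (n.factorial * Real.exp (f x) * ((1 + C) * (1 + ‖x‖) ^ l) ^ n) := by
        gcongr
        linarith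
    _ = n.factorial * (1 + C) ^ n * ((1 + ‖x‖) ^ (k + l * n) * Real.exp (f x)) := by
        rw [mul_pow, ← pow_mul, pow_add]; ring
    _ ≤ _ := by
        refine mul_le_mul_of_nonneg_left ?_ (by positivity)
        exact one_add_pow_mul_exp_neg_le hδ _ (norm_nonneg x)

end Gaussian

section Subordination

/-- The subordination formula `l^(-γ) = Γ(γ)⁻¹ ∫ r in (0, ∞), r^(γ-1) exp (-r l)`. -/
theorem integral_Ioi_gamma_density {γ l : ℝ} (hγ : 0 < γ) (hl : 0 < l) :
    ∫ r in Set.Ioi (0 : ℝ), r ^ (γ - 1) / Real.Gamma γ * Real.exp (-r * l) = l ^ (-γ) := by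
  have h := Real.integral_rpow_mul_exp_neg_mul_Ioi hγ hl
  have hΓ := (Real.Gamma_pos_of_pos hγ).ne'
  calc _ = ∫ r in Set.Ioi (0 : ℝ), (Real.Gamma γ)⁻¹ * (r ^ (γ - 1) * Real.exp (-(l * r))) := by
        congr 1 with r
        rw [neg_mul, mul_comm r l]
        ring
    _ = _ := by
        rw [integral_const_mul, h, one_div, Real.inv_rpow hl.le, Real.rpow_neg hl.le]
        field_simp

theorem integrableOn_Ioi_gamma_density {γ l : ℝ} (hγ : 0 < γ) (hl : 0 < l) :
    IntegrableOn (fun r : ℝ => r ^ (γ - 1) / Real.Gamma γ * Real.exp (-r * l)) (Set.Ioi 0) := by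
  refine Integrable.of_integral_ne_zero ?_
  rw [integral_Ioi_gamma_density hγ hl]
  positivity

/-- Splitting the subordination formula at `δ`. -/
theorem rpow_eq_integral_Ioc_add_integral_Ioi {a b δ l : ℝ} (hab : a < b) (hδ : 0 < δ)
    (hl : 0 < l) :
    l ^ a = (∫ r in Set.Ioc 0 δ, r ^ (b - a - 1) / Real.Gamma (b - a) * Real.exp (-r * l)) * l ^ b +
      (∫ r in Set.Ioi δ, r ^ (b - a - 1) / Real.Gamma (b - a) * Real.exp (-(r - δ) * l)) *
        (l ^ b * Real.exp (-(δ * l))) := by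
  have hγ : 0 < b - a := sub_pos.2 hab
  have hint := integrableOn_Ioi_gamma_density hγ hl
  have hsplit : ∫ r in Set.Ioi (0 : ℝ), r ^ (b - a - 1) / Real.Gamma (b - a) * Real.exp (-r * l) =
      (∫ r in Set.Ioc 0 δ, r ^ (b - a - 1) / Real.Gamma (b - a) * Real.exp (-r * l)) +
      ∫ r in Set.Ioi δ, r ^ (b - a - 1) / Real.Gamma (b - a) * Real.exp (-r * l) := by
    rw [← Set.Ioc_union_Ioi_eq_Ioi hδ.le]
    exact setIntegral_union (Set.Ioc_disjoint_Ioi le_rfl) measurableSet_Ioi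
      (hint.mono_set Set.Ioc_subset_Ioi_self) (hint.mono_set (Set.Ioi_subset_Ioi hδ.le))
  have htail : (∫ r in Set.Ioi δ, r ^ (b - a - 1) / Real.Gamma (b - a) * Real.exp (-(r - δ) * l)) *
      Real.exp (-(δ * l)) =
      ∫ r in Set.Ioi δ, r ^ (b - a - 1) / Real.Gamma (b - a) * Real.exp (-r * l) := by
    rw [← integral_mul_const]
    congr 1 with r
    rw [mul_assoc, ← Real.exp_add]
    congr 2
    ring
  calc l ^ a = l ^ (-(b - a)) * l ^ b := by rw [← Real.rpow_add hl]; congr 1; ring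
    _ = _ := by
        rw [← integral_Ioi_gamma_density hγ hl, hsplit, ← htail]
        ring

theorem exists_lintegral_Ioc_gamma_density_le {γ ε : ℝ} (hγ : 0 < γ) (hε : 0 < ε) :
    ∃ δ > 0, ∫⁻ r in Set.Ioc (0 : ℝ) δ, ‖r ^ (γ - 1) / Real.Gamma γ * Real.exp (-r)‖ₑ ≤
      ENNReal.ofReal ε := by
  have hint := integrableOn_Ioi_gamma_density hγ one_pos
  simp only [mul_one] at hint
  obtain ⟨η, hη, h⟩ := exists_pos_setLIntegral_lt_of_measure_lt hint.2.ne
    (ENNReal.ofReal_pos.2 hε).ne'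
  obtain ⟨d, hd0, hd⟩ := ENNReal.lt_iff_exists_nnreal_btwn.1 hη
  have hd0' : (0 : ℝ) < d := by exact_mod_cast hd0
  refine ⟨d, hd0', ?_⟩
  have hs : (volume.restrict (Set.Ioi (0 : ℝ))).restrict (Set.Ioc 0 (d : ℝ)) =
      volume.restrict (Set.Ioc 0 (d : ℝ)) :=
    Measure.restrict_restrict_of_subset Set.Ioc_subset_Ioi_self
  have := h (Set.Ioc 0 d) (by
    refine (Measure.restrict_apply_le _ _).trans_lt ?_
    simpa using hd)
  rw [hs] at this
  exact this.le

end Subordination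

theorem besselPotential_neg_ofReal (n : ℕ) (s : ℝ) (f : EuclideanSpace ℝ (Fin n) → ℂ) :
    besselPotential n (-(s : ℂ)) f =
      𝓕⁻ (fun ξ => (((1 + ‖ξ‖ ^ 2) ^ (s / 2) : ℝ) : ℂ) * 𝓕 f ξ) := by
  unfold besselPotential
  congr 1 with ξ
  rw [Complex.ofReal_cpow (by positivity)]
  push_cast
  rw [neg_neg]

/-- A Fourier multiplier on Schwartz functions with a symbol of temperate growth. -/
theorem exists_schwartzMap_fourier_eq_mul {V : Type*} [NormedAddCommGroup V]
    [InnerProductSpace ℝ V] [FiniteDimensional ℝ V] [MeasurableSpace V] [BorelSpace V]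
    {g : V → ℂ} (hg : g.HasTemperateGrowth) (φ : 𝓢(V, ℂ)) :
    ∃ ψ : 𝓢(V, ℂ), 𝓕 (ψ : V → ℂ) = (fun ξ => g ξ * 𝓕 (φ : V → ℂ) ξ) ∧
      𝓕⁻ (fun ξ => g ξ * 𝓕 (φ : V → ℂ) ξ) = ψ := by
  set Φ : 𝓢(V, ℂ) := SchwartzMap.smulLeftCLM ℂ g (𝓕 φ) with hΦ
  have hcoe : (Φ : V → ℂ) = fun ξ => g ξ * 𝓕 (φ : V → ℂ) ξ := by
    ext ξ
    rw [hΦ, SchwartzMap.smulLeftCLM_apply_apply hg, smul_eq_mul, SchwartzMap.fourier_coe]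
  refine ⟨𝓕⁻ Φ, ?_, ?_⟩
  · rw [← SchwartzMap.fourier_coe, FourierTransform.fourier_fourierInv_eq, hcoe]
  · rw [← hcoe, SchwartzMap.fourierInv_coe]

/-- The symbol `(1 + |ξ|²)^b exp (-δ (1 + |ξ|²))` is the Fourier transform of a Schwartz function. -/
theorem exists_schwartzMap_fourier_eq_rpow_mul_exp {V : Type*} [NormedAddCommGroup V]
    [InnerProductSpace ℝ V] [FiniteDimensional ℝ V] [MeasurableSpace V] [BorelSpace V]
    {δ : ℝ} (hδ : 0 < δ) (b : ℝ) :
    ∃ K : 𝓢(V, ℂ), 𝓕 (K : V → ℂ) = fun ξ =>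
      (((1 + ‖ξ‖ ^ 2) ^ b * Real.exp (-(δ * (1 + ‖ξ‖ ^ 2))) : ℝ) : ℂ) := by
  obtain ⟨G, hG⟩ := exists_schwartzMap_eq_exp_neg (V := V) hδ
  obtain ⟨K, hK, -⟩ := exists_schwartzMap_fourier_eq_mul
    (g := fun ξ : V => (((1 + ‖ξ‖ ^ 2) ^ b : ℝ) : ℂ)) (by fun_prop)
    (𝓕⁻ (G.postcompCLM Complex.ofRealCLM) : 𝓢(V, ℂ))
  refine ⟨K, ?_⟩
  rw [hK, ← SchwartzMap.fourier_coe, FourierTransform.fourier_fourierInv_eq]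
  ext ξ
  simp [hG]

/-- M. W. Wong's inequality: for `1 ≤ q < ∞`, `0 < s < t` and every `ε > 0` there is
`C > 0` with `‖J_{-s} φ‖_q ≤ ε ‖J_{-t} φ‖_q + C ‖φ‖_q` for all Schwartz `φ`. -/
theorem wong_inequality (n : ℕ) (q : ℝ≥0∞) (hq : 1 ≤ q) (hq' : q ≠ ∞)
    (s t : ℝ) (hs : 0 < s) (hst : s < t) :
    ∀ ε : ℝ, 0 < ε → ∃ C : ℝ, 0 < C ∧
      ∀ φ : 𝓢(EuclideanSpace ℝ (Fin n), ℂ),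
        eLpNorm (besselPotential n (-(s : ℂ)) ⇑φ) q volume ≤
          ENNReal.ofReal ε * eLpNorm (besselPotential n (-(t : ℂ)) ⇑φ) q volume +
            ENNReal.ofReal C * eLpNorm (⇑φ) q volume := by
  intro ε hε
  have hγ : 0 < t / 2 - s / 2 := by linarith
  obtain ⟨δ, hδ, hδε⟩ := exists_lintegral_Ioc_gamma_density_le hγ hε
  obtain ⟨K, hK⟩ := exists_schwartzMap_fourier_eq_rpow_mul_exp (V := EuclideanSpace ℝ (Fin n)) hδ
    (t / 2)
  set w : ℝ → ℝ := fun r => r ^ (t / 2 - s / 2 - 1) / Real.Gamma (t / 2 - s / 2)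
  have hint : IntegrableOn (fun r => w r * Real.exp (-r)) (Set.Ioi 0) := by
    simpa using integrableOn_Ioi_gamma_density hγ one_pos
  have hhead : IntegrableOn (fun r => w r * Real.exp (-r)) (Set.Ioc 0 δ) :=
    hint.mono_set Set.Ioc_subset_Ioi_self
  have htail : IntegrableOn (fun r => w r * Real.exp (-(r - δ))) (Set.Ioi δ) := by
    refine ((hint.mono_set (Set.Ioi_subset_Ioi hδ.le)).mul_const (Real.exp δ)).congr
      (.of_forall fun r => ?_)
    simp only
    rw [mul_assoc, ← Real.exp_add]
    congr 2
    ring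
  have hhead0 : ∀ r ∈ Set.Ioc 0 δ, 0 ≤ r := fun r hr => hr.1.le
  have htail0 : ∀ r ∈ Set.Ioi δ, 0 ≤ r - δ := fun r hr => sub_nonneg.2 (le_of_lt hr)
  set B : ℝ≥0∞ := (∫⁻ r in Set.Ioi δ, ‖w r * Real.exp (-(r - δ))‖ₑ) * ∫⁻ x, ‖K x‖ₑ with hB
  have hBtop : B ≠ ∞ := ENNReal.mul_ne_top htail.2.ne (K.integrable (μ := volume)).2.ne
  refine ⟨B.toReal + 1, by positivity, fun φ => ?_⟩
  obtain ⟨ψ, hψ, hψ'⟩ := exists_schwartzMap_fourier_eq_mul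
    (g := fun ξ : EuclideanSpace ℝ (Fin n) => (((1 + ‖ξ‖ ^ 2) ^ (t / 2) : ℝ) : ℂ)) (by fun_prop) φ
  obtain ⟨χ, hχ, hχ'⟩ := exists_schwartzMap_fourier_eq_mul
    (𝓕 K : 𝓢(EuclideanSpace ℝ (Fin n), ℂ)).hasTemperateGrowth φ
  rw [SchwartzMap.fourier_coe] at hχ hχ'
  have h₁ := integrable_heat_mul_fourier measurableSet_Ioc measurable_id hhead0 hhead ψ
  have h₂ := integrable_heat_mul_fourier measurableSet_Ioi (measurable_id.sub_const δ) htail0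
    htail χ
  have hsum : besselPotential n (-(s : ℂ)) φ =
      𝓕⁻ (fun ξ => ((∫ r in Set.Ioc 0 δ, w r * Real.exp (-r * (1 + ‖ξ‖ ^ 2)) : ℝ) : ℂ) *
        𝓕 (ψ : EuclideanSpace ℝ (Fin n) → ℂ) ξ) +
      𝓕⁻ (fun ξ => ((∫ r in Set.Ioi δ, w r * Real.exp (-(r - δ) * (1 + ‖ξ‖ ^ 2)) : ℝ) : ℂ) *
        𝓕 (χ : EuclideanSpace ℝ (Fin n) → ℂ) ξ) := by
    rw [besselPotential_neg_ofReal]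
    ext x
    rw [Pi.add_apply, Real.fourierInv_eq, Real.fourierInv_eq, Real.fourierInv_eq, ← integral_add]
    rotate_left
    · exact integrable_fourierChar_inner_smul h₁ x
    · exact integrable_fourierChar_inner_smul h₂ x
    congr 1 with ξ
    rw [← smul_add, hψ, hχ, hK,
      rpow_eq_integral_Ioc_add_integral_Ioi (show s / 2 < t / 2 by linarith) hδ
        (show 0 < 1 + ‖ξ‖ ^ 2 by positivity)]
    congr 1
    push_cast
    ring
  calc _ ≤ (∫⁻ r in Set.Ioc 0 δ, ‖w r * Real.exp (-r)‖ₑ) * eLpNorm ψ q volume +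
        (∫⁻ r in Set.Ioi δ, ‖w r * Real.exp (-(r - δ))‖ₑ) * eLpNorm χ q volume := by
        rw [hsum]
        refine (eLpNorm_add_le ?_ ?_ hq).trans (add_le_add
          (eLpNorm_fourierInv_heat_le measurableSet_Ioc measurable_id hhead0 hhead ψ hq hq')
          (eLpNorm_fourierInv_heat_le measurableSet_Ioi (measurable_id.sub_const δ) htail0
            htail χ hq hq'))
        · exact (continuous_fourierInv h₁).aestronglyMeasurable
        · exact (continuous_fourierInv h₂).aestronglyMeasurable
    _ ≤ ENNReal.ofReal ε * eLpNorm ψ q volume +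
        (∫⁻ r in Set.Ioi δ, ‖w r * Real.exp (-(r - δ))‖ₑ) *
          ((∫⁻ x, ‖K x‖ₑ) * eLpNorm φ q volume) := by
        gcongr
        rw [← hχ']
        exact eLpNorm_fourierInv_mul_fourier_le K φ hq hq'
    _ ≤ _ := by
        rw [besselPotential_neg_ofReal, hψ', ← mul_assoc, ← hB]
        gcongr
        exact ENNReal.le_ofReal_iff_toReal_le hBtop (by positivity) |>.2 (by linarith)
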